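/- The pair (G, A) is stackable if and only if there exist a prefix-closed normal form set C ⊆ List A containing the empty word and a bounded flow function with respect to C. -/

import Mathlib

namespace Stk

variable {G : Type*} [Group G] {A : Type*}

/-- Evaluation of a word over the generating alphabet in the group. -/
def eval (ρ : A → G) (w : List A) : G := (w.map ρ).prod

/-- `C` is a set of normal forms: evaluation restricted to `C` is a bijection onto `G`. -/
def IsNormalFormSet (ρ : A → G) (C : Set (List A)) : Prop :=
  ∀ g : G, ∃! w : List A, w ∈ C ∧ eval ρ w = g

/-- The directed edge `(g, a)` of the Cayley graph is degenerate with respect to `C`. -/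
def IsDegenerate (ρ : A → G) (ι : A → A) (C : Set (List A)) (e : G × A) : Prop :=
  ∃ y₁ y₂ : List A, y₁ ∈ C ∧ eval ρ y₁ = e.1 ∧ y₂ ∈ C ∧ eval ρ y₂ = e.1 * ρ e.2 ∧
    (y₁ ++ [e.2] = y₂ ∨ y₁ = y₂ ++ [ι e.2])

/-- A non-degenerate edge is recursive. -/
def IsRecursive (ρ : A → G) (ι : A → A) (C : Set (List A)) (e : G × A) : Prop :=
  ¬ IsDegenerate ρ ι C e

/-- `e` is one of the edges along the path starting at `g` labeled by the word `w`. -/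
def EdgeOnPath (ρ : A → G) (g : G) (w : List A) (e : G × A) : Prop :=
  ∃ i : Fin w.length, e = (g * eval ρ (w.take i), w.get i)

/-- A stackable structure for `(G, A)`: a normal form set `C` containing the empty word,
a well-founded strict partial order `lt` on the recursive edges, and a constant `k`,
such that each edge `(g, a)` admits a word of length at most `k` evaluating to `ρ a`,
each of whose edges along the path from `g` is degenerate or recursive and `lt`-below
`(g, a)`. -/
def IsStackableStructure (ρ : A → G) (ι : A → A) (C : Set (List A))
    (lt : G × A → G × A → Prop) (k : ℕ) : Prop :=
  ([] : List A) ∈ C ∧ IsNormalFormSet ρ C ∧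
  (∀ e e' : G × A, lt e e' → IsRecursive ρ ι C e ∧ IsRecursive ρ ι C e') ∧
  Transitive lt ∧ WellFounded lt ∧
  ∀ g : G, ∀ a : A, ∃ w : List A, w.length ≤ k ∧ eval ρ w = ρ a ∧
    ∀ e' : G × A, EdgeOnPath ρ g w e' → IsDegenerate ρ ι C e' ∨ lt e' (g, a)

/-- The pair `(G, A)` is stackable. -/
def IsStackable (ρ : A → G) (ι : A → A) : Prop :=
  ∃ (C : Set (List A)) (lt : G × A → G × A → Prop) (k : ℕ),
    IsStackableStructure ρ ι C lt k

/-- A stacking map for a stackable structure. -/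
def IsStackingMap (ρ : A → G) (ι : A → A) (C : Set (List A))
    (lt : G × A → G × A → Prop) (k : ℕ) (Φ : G × A → List A) : Prop :=
  ∀ e : G × A, IsRecursive ρ ι C e →
    eval ρ (Φ e) = ρ e.2 ∧ (Φ e).length ≤ k ∧
    ∀ e' : G × A, EdgeOnPath ρ e.1 (Φ e) e' → IsDegenerate ρ ι C e' ∨ lt e' e

/-- A stacking map extended by `Φ (g, a) = [a]` on degenerate edges. -/
def IsExtendedStackingMap (ρ : A → G) (ι : A → A) (C : Set (List A))
    (lt : G × A → G × A → Prop) (k : ℕ) (Φ : G × A → List A) : Prop :=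
  (∀ e : G × A, IsDegenerate ρ ι C e → Φ e = [e.2]) ∧ IsStackingMap ρ ι C lt k Φ

/-- A word is freely reduced if no letter is followed by its formal inverse. -/
def FreelyReduced (ι : A → A) (w : List A) : Prop :=
  List.Chain' (fun a b => b ≠ ι a) w


/-- `C` is closed under taking prefixes. -/
def PrefixClosed (C : Set (List A)) : Prop :=
  ∀ w ∈ C, ∀ p : List A, p <+: w → p ∈ C

/-- A flow function with respect to a prefix-closed normal form set `C`:
(F1) `Φ (g, a)` evaluates to `ρ a`; (F2d) `Φ` is the identity on degenerate edges;
(F2r) the transitive closure of the induced relation on recursive edges is a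
well-founded strict partial order. -/
def IsFlowFunction (ρ : A → G) (ι : A → A) (C : Set (List A))
    (Φ : G × A → List A) : Prop :=
  (∀ e : G × A, eval ρ (Φ e) = ρ e.2) ∧
  (∀ e : G × A, IsDegenerate ρ ι C e → Φ e = [e.2]) ∧
  WellFounded (Relation.TransGen (fun e' e : G × A =>
    IsRecursive ρ ι C e ∧ IsRecursive ρ ι C e' ∧ EdgeOnPath ρ e.1 (Φ e) e'))

/-!
Given a stackable structure, the induced path relation of any choice of bounded words is contained
in the given well-founded order, so such a choice is a flow function; conversely, `<_Φ` is a
stacking order. The real point is that the normal form set is automatically prefix-closed. Call a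
vertex good if all prefixes of its normal form lie in `C`. Goodness passes across degenerate edges
in both directions, because there the two normal forms differ by one final letter. By well-founded
induction it passes across recursive edges too, since each of these can be replaced by a path of
degenerate and smaller edges. The vertex `1` is good and every vertex is the end of a path
from `1`.
-/

section

variable {ρ : A → G} {ι : A → A} {C : Set (List A)} {lt : G × A → G × A → Prop} {k : ℕ}
  {Φ : G × A → List A}

@[simp] lemma eval_nil : eval ρ [] = 1 := rfl

@[simp] lemma eval_cons (a : A) (w : List A) : eval ρ (a :: w) = ρ a * eval ρ w := by
  simp [eval]

@[simp] lemma not_edgeOnPath_nil (g : G) (e : G × A) : ¬ EdgeOnPath ρ g [] e := by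
  rintro ⟨i, -⟩
  exact i.elim0

@[simp] lemma edgeOnPath_cons {g : G} {a : A} {w : List A} {e : G × A} :
    EdgeOnPath ρ g (a :: w) e ↔ e = (g, a) ∨ EdgeOnPath ρ (g * ρ a) w e := by
  simp only [EdgeOnPath, List.length_cons, Fin.exists_fin_succ]
  simp [mul_assoc]

lemma iff_mul_eval_of_edgeOnPath {P : G → Prop} {g : G} {w : List A}
    (h : ∀ e, EdgeOnPath ρ g w e → (P e.1 ↔ P (e.1 * ρ e.2))) :
    P g ↔ P (g * eval ρ w) := by
  induction w generalizing g with
  | nil => simp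
  | cons a w ih =>
    rw [eval_cons, ← mul_assoc]
    exact (h (g, a) (edgeOnPath_cons.2 (.inl rfl))).trans
      (ih fun e he => h e (edgeOnPath_cons.2 (.inr he)))

lemma IsNormalFormSet.eq_of_eval_eq (hC : IsNormalFormSet ρ C) {v w : List A} (hv : v ∈ C)
    (hw : w ∈ C) (h : eval ρ v = eval ρ w) : v = w :=
  (hC _).unique ⟨hv, h⟩ ⟨hw, rfl⟩

lemma forall_prefix_concat_mem_iff {w : List A} {a : A} (hwa : w ++ [a] ∈ C) :
    (∀ p, p <+: w ++ [a] → p ∈ C) ↔ ∀ p, p <+: w → p ∈ C := by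
  simp [List.prefix_concat_iff, or_imp, forall_and, hwa]

/-- The vertex `g` has a normal form all of whose prefixes are normal forms. This is
prefix-closedness of `C` as a property of one vertex, so that it can be propagated along edges. -/
def HasPrefixClosedNormalForm (ρ : A → G) (C : Set (List A)) (g : G) : Prop :=
  ∃ y ∈ C, eval ρ y = g ∧ ∀ p, p <+: y → p ∈ C

lemma IsNormalFormSet.hasPrefixClosedNormalForm_eval_iff (hC : IsNormalFormSet ρ C) {w : List A}
    (hw : w ∈ C) : HasPrefixClosedNormalForm ρ C (eval ρ w) ↔ ∀ p, p <+: w → p ∈ C := by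
  refine ⟨?_, fun h => ⟨w, hw, rfl, h⟩⟩
  rintro ⟨y, hy, hyw, h⟩
  rwa [← hC.eq_of_eval_eq hy hw hyw]

lemma IsDegenerate.hasPrefixClosedNormalForm_iff (hC : IsNormalFormSet ρ C) {e : G × A}
    (he : IsDegenerate ρ ι C e) :
    HasPrefixClosedNormalForm ρ C e.1 ↔ HasPrefixClosedNormalForm ρ C (e.1 * ρ e.2) := by
  obtain ⟨y₁, y₂, hy₁, hey₁, hy₂, hey₂, h⟩ := he
  rw [← hey₂, ← hey₁, hC.hasPrefixClosedNormalForm_eval_iff hy₁,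
    hC.hasPrefixClosedNormalForm_eval_iff hy₂]
  obtain rfl | rfl := h
  · exact (forall_prefix_concat_mem_iff hy₂).symm
  · exact forall_prefix_concat_mem_iff hy₁

namespace IsStackableStructure

lemma iff_mul_of_isDegenerate (h : IsStackableStructure ρ ι C lt k) {P : G → Prop}
    (hdeg : ∀ e, IsDegenerate ρ ι C e → (P e.1 ↔ P (e.1 * ρ e.2))) (e : G × A) :
    P e.1 ↔ P (e.1 * ρ e.2) := by
  obtain ⟨-, -, -, -, hwf, hword⟩ := h
  induction e using hwf.induction with
  | _ e ih =>
    obtain ⟨w, -, hw, hpath⟩ := hword e.1 e.2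
    rw [← hw]
    exact iff_mul_eval_of_edgeOnPath fun e' he' => (hpath e' he').elim (hdeg e') (ih e')

theorem prefixClosed (h : IsStackableStructure ρ ι C lt k) : PrefixClosed C := by
  have ⟨hnil, hC, _⟩ := h
  have hone : HasPrefixClosedNormalForm ρ C 1 :=
    ⟨[], hnil, eval_nil, fun p hp => List.prefix_nil.1 hp ▸ hnil⟩
  have hedge (e : G × A) :
      HasPrefixClosedNormalForm ρ C e.1 ↔ HasPrefixClosedNormalForm ρ C (e.1 * ρ e.2) :=
    h.iff_mul_of_isDegenerate (fun _ he => he.hasPrefixClosedNormalForm_iff hC) e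
  intro w hw
  rw [← hC.hasPrefixClosedNormalForm_eval_iff hw, ← one_mul (eval ρ w)]
  exact (iff_mul_eval_of_edgeOnPath fun e _ => hedge e).1 hone

lemma exists_isExtendedStackingMap (h : IsStackableStructure ρ ι C lt k) :
    ∃ Φ, IsExtendedStackingMap ρ ι C lt k Φ := by
  classical
  obtain ⟨-, -, -, -, -, hword⟩ := h
  choose w hlen heval hpath using hword
  refine ⟨fun e => if IsDegenerate ρ ι C e then [e.2] else w e.1 e.2,
    fun e he => if_pos he, fun e he => ?_⟩
  simp only [if_neg (show ¬ IsDegenerate ρ ι C e from he)]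
  exact ⟨heval _ _, hlen _ _, hpath _ _⟩

end IsStackableStructure

namespace IsExtendedStackingMap

lemma isFlowFunction (hΦ : IsExtendedStackingMap ρ ι C lt k Φ) (hwf : WellFounded lt) :
    IsFlowFunction ρ ι C Φ := by
  obtain ⟨hdeg, hrec⟩ := hΦ
  refine ⟨fun e => ?_, hdeg, (Subrelation.wf ?_ hwf).transGen⟩
  · by_cases he : IsDegenerate ρ ι C e
    · simp [hdeg e he]
    · exact (hrec e he).1
  · rintro e' e ⟨he, he', hpath⟩
    exact ((hrec e he).2.2 e' hpath).resolve_left he'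

lemma length_le (hΦ : IsExtendedStackingMap ρ ι C lt k Φ) (e : G × A) :
    (Φ e).length ≤ max k 1 := by
  by_cases he : IsDegenerate ρ ι C e
  · simp [hΦ.1 e he]
  · exact le_max_of_le_left (hΦ.2 e he).2.1

end IsExtendedStackingMap

/-- The strict order `<_Φ` on recursive edges induced by a flow function `Φ`: the transitive closure
of the relation that places the recursive edges on the path labeled `Φ e` below the recursive
edge `e`. -/
def FlowLT (ρ : A → G) (ι : A → A) (C : Set (List A)) (Φ : G × A → List A) :
    G × A → G × A → Prop :=
  Relation.TransGen fun e' e =>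
    IsRecursive ρ ι C e ∧ IsRecursive ρ ι C e' ∧ EdgeOnPath ρ e.1 (Φ e) e'

lemma FlowLT.isRecursive {e' e : G × A} (h : FlowLT ρ ι C Φ e' e) :
    IsRecursive ρ ι C e' ∧ IsRecursive ρ ι C e := by
  induction h with
  | single h => exact ⟨h.2.1, h.1⟩
  | tail _ h ih => exact ⟨ih.1, h.1⟩

namespace IsFlowFunction

lemma isDegenerate_of_edgeOnPath (hΦ : IsFlowFunction ρ ι C Φ) {e e' : G × A}
    (he : IsDegenerate ρ ι C e) (he' : EdgeOnPath ρ e.1 (Φ e) e') : IsDegenerate ρ ι C e' := by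
  rw [hΦ.2.1 e he, edgeOnPath_cons] at he'
  obtain rfl := he'.resolve_right (not_edgeOnPath_nil _ _)
  exact he

lemma isDegenerate_or_flowLT (hΦ : IsFlowFunction ρ ι C Φ) {e e' : G × A}
    (he' : EdgeOnPath ρ e.1 (Φ e) e') : IsDegenerate ρ ι C e' ∨ FlowLT ρ ι C Φ e' e :=
  or_iff_not_imp_left.2 fun hrec' =>
    .single ⟨fun he => hrec' (hΦ.isDegenerate_of_edgeOnPath he he'), hrec', he'⟩

theorem isStackableStructure (hΦ : IsFlowFunction ρ ι C Φ) (hnil : [] ∈ C)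
    (hC : IsNormalFormSet ρ C) (hk : ∀ e, (Φ e).length ≤ k) :
    IsStackableStructure ρ ι C (FlowLT ρ ι C Φ) k :=
  ⟨hnil, hC, fun _ _ => FlowLT.isRecursive, fun _ _ _ => Relation.TransGen.trans, hΦ.2.2,
    fun g a => ⟨Φ (g, a), hk _, hΦ.1 _, fun _ => hΦ.isDegenerate_or_flowLT⟩⟩

end IsFlowFunction

end

theorem isStackable_iff_exists_bounded_flowFunction_general {G : Type*} [Group G] {A : Type*}
    (ρ : A → G) (ι : A → A) (_hρι : ∀ a : A, ρ (ι a) = (ρ a)⁻¹) :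
    IsStackable ρ ι ↔
      ∃ (C : Set (List A)) (Φ : G × A → List A) (k : ℕ),
        ([] : List A) ∈ C ∧ IsNormalFormSet ρ C ∧ PrefixClosed C ∧
        IsFlowFunction ρ ι C Φ ∧ ∀ e : G × A, (Φ e).length ≤ k := by
  constructor
  · rintro ⟨C, lt, k, h⟩
    have ⟨hnil, hC, _, _, hwf, _⟩ := h
    obtain ⟨Φ, hΦ⟩ := h.exists_isExtendedStackingMap
    exact ⟨C, Φ, max k 1, hnil, hC, h.prefixClosed, hΦ.isFlowFunction hwf, hΦ.length_le⟩
  · rintro ⟨C, Φ, k, hnil, hC, -, hΦ, hk⟩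
    exact ⟨C, FlowLT ρ ι C Φ, k, hΦ.isStackableStructure hnil hC hk⟩

/-- `(G, A)` is stackable iff there are a prefix-closed normal form set
containing the empty word and a bounded flow function with respect to it. -/
theorem isStackable_iff_exists_bounded_flowFunction {G : Type*} [Group G] {A : Type*}
    [Fintype A]
    (ρ : A → G) (ι : A → A)
    (hgen : Subgroup.closure (Set.range ρ) = ⊤)
    (hne : ∀ a : A, ρ a ≠ 1)
    (hinv : Function.Involutive ι)
    (hρι : ∀ a : A, ρ (ι a) = (ρ a)⁻¹) :
    IsStackable ρ ι ↔
      ∃ (C : Set (List A)) (Φ : G × A → List A) (k : ℕ),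
        ([] : List A) ∈ C ∧ IsNormalFormSet ρ C ∧ PrefixClosed C ∧
        IsFlowFunction ρ ι C Φ ∧ ∀ e : G × A, (Φ e).length ≤ k :=
  isStackable_iff_exists_bounded_flowFunction_general ρ ι hρι

end Stk
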